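/- For $Z=(Z_0,Z_1,Z_2,Z_3)\in\mathbb C^4$ define $\sigma(Z)\in\mathbb C^4$ by $\sigma(Z)_\mu=\eta_\mu\bigl(Z_\mu^3-Z_\mu\sum_{\nu\ne\mu}Z_\nu^2-2\prod_{\lambda\ne\mu}Z_\lambda\bigr)$ for $\mu\in\{0,1,2,3\}$, where $\eta_0=1$ and $\eta_1=\eta_2=\eta_3=-1$. Then: (i) for every $Z\in\mathbb C^4$ the three identities $Z_1\sigma(Z)_0-Z_0\sigma(Z)_1+Z_3\sigma(Z)_2+Z_2\sigma(Z)_3=0$, $Z_2\sigma(Z)_0+Z_3\sigma(Z)_1-Z_0\sigma(Z)_2+Z_1\sigma(Z)_3=0$, and $Z_3\sigma(Z)_0+Z_2\sigma(Z)_1+Z_1\sigma(Z)_2-Z_0\sigma(Z)_3=0$ hold; and (ii) for all $a,b,c\in\mathbb C$ and every $Z\in\mathbb C^4$ satisfying $b(Z_0^2-Z_1^2)=a(Z_0^2-Z_2^2)$, $c(Z_0^2-Z_2^2)=b(Z_0^2-Z_3^2)$ and $c(Z_0^2-Z_1^2)=a(Z_0^2-Z_3^2)$ (that is, for nonzero $a,b,c$,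 $\frac{Z_0^2-Z_1^2}{a}=\frac{Z_0^2-Z_2^2}{b}=\frac{Z_0^2-Z_3^2}{c}$), the three further identities $(b-c)Z_1\sigma(Z)_0+(b-c)Z_0\sigma(Z)_1-aZ_3\sigma(Z)_2+aZ_2\sigma(Z)_3=0$, $(c-a)Z_2\sigma(Z)_0+bZ_3\sigma(Z)_1+(c-a)Z_0\sigma(Z)_2-bZ_1\sigma(Z)_3=0$, and $(a-b)Z_3\sigma(Z)_0-cZ_2\sigma(Z)_1+cZ_1\sigma(Z)_2+(a-b)Z_0\sigma(Z)_3=0$ hold. -/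

import Mathlib

/-- The cubic map
`σ(Z)_μ = η_μ (Z_μ³ − Z_μ Σ_{ν≠μ} Z_ν² − 2 ∏_{λ≠μ} Z_λ)` of `ℂ⁴`, with
`η₀ = 1` and `η₁ = η₂ = η₃ = −1`. -/
noncomputable def sigma15 (Z : Fin 4 → ℂ) : Fin 4 → ℂ := fun μ =>
  (if μ = 0 then 1 else -1) *
    ((Z μ) ^ 3 - Z μ * (∑ ν ∈ Finset.univ.erase μ, (Z ν) ^ 2)
      - 2 * ∏ l ∈ Finset.univ.erase μ, Z l)

/-!
Strip the signs `η` from `σ` and call the result `τ`. Splitting the indices into `s = {i, j}` and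
its complement,
`Z j * τ i + Z i * τ j = -2 ((∏ₛ Z)(∑ₛᶜ Z²) + (∑ₛ Z²)(∏ₛᶜ Z))` and
`Z j * τ i - Z i * τ j = 2 (∏ₛ Z + ∏ₛᶜ Z)(Z i² - Z j²)`.
The first right-hand side does not change when `s` and `sᶜ` are exchanged, which for four indices
gives the first three rows. In the second, the factor `∏ₛ Z + ∏ₛᶜ Z` is common to `s` and `sᶜ`, so
each of the last three rows is this factor times a linear relation between the squares of the
coordinates, and that relation holds on the characteristic curve.
-/

section UnsignedSigma

variable {ι R : Type*} [Fintype ι] [DecidableEq ι] [CommRing R]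

/-- The components of `σ` without the signs `η`, for any finite number of coordinates. -/
def unsignedSigma (Z : ι → R) (μ : ι) : R :=
  Z μ ^ 3 - Z μ * (∑ ν ∈ Finset.univ.erase μ, Z ν ^ 2) - 2 * ∏ ν ∈ Finset.univ.erase μ, Z ν

theorem unsignedSigma_eq_of_ne (Z : ι → R) {i j : ι} (hij : i ≠ j) :
    unsignedSigma Z i =
      Z i ^ 3 - Z i * (Z j ^ 2 + ∑ ν ∈ {i, j}ᶜ, Z ν ^ 2) - 2 * (Z j * ∏ ν ∈ {i, j}ᶜ, Z ν) := by
  have erase_eq : Finset.univ.erase i = insert j ({i, j}ᶜ : Finset ι) := by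
    ext k
    by_cases hk : k = j <;> simp [hk, hij.symm]
  have notMem : j ∉ ({i, j}ᶜ : Finset ι) := by simp
  rw [unsignedSigma, erase_eq, Finset.sum_insert notMem, Finset.prod_insert notMem]

theorem mul_unsignedSigma_add (Z : ι → R) {i j : ι} (hij : i ≠ j) :
    Z j * unsignedSigma Z i + Z i * unsignedSigma Z j =
      -2 * ((∏ ν ∈ {i, j}, Z ν) * (∑ ν ∈ {i, j}ᶜ, Z ν ^ 2) +
        (∑ ν ∈ {i, j}, Z ν ^ 2) * ∏ ν ∈ {i, j}ᶜ, Z ν) := by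
  rw [unsignedSigma_eq_of_ne Z hij, unsignedSigma_eq_of_ne Z hij.symm, Finset.pair_comm j i,
    Finset.prod_pair hij, Finset.sum_pair hij]
  ring

theorem mul_unsignedSigma_sub (Z : ι → R) {i j : ι} (hij : i ≠ j) :
    Z j * unsignedSigma Z i - Z i * unsignedSigma Z j =
      2 * (∏ ν ∈ {i, j}, Z ν + ∏ ν ∈ {i, j}ᶜ, Z ν) * (Z i ^ 2 - Z j ^ 2) := by
  rw [unsignedSigma_eq_of_ne Z hij, unsignedSigma_eq_of_ne Z hij.symm, Finset.pair_comm j i,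
    Finset.prod_pair hij]
  ring

theorem mul_unsignedSigma_add_eq_of_compl (Z : ι → R) {i j k l : ι} (hij : i ≠ j) (hkl : k ≠ l)
    (hcompl : ({i, j} : Finset ι)ᶜ = {k, l}) :
    Z j * unsignedSigma Z i + Z i * unsignedSigma Z j =
      Z l * unsignedSigma Z k + Z k * unsignedSigma Z l := by
  rw [mul_unsignedSigma_add Z hij, mul_unsignedSigma_add Z hkl, ← hcompl, compl_compl]
  ring

theorem mul_unsignedSigma_sub_eq_of_compl (Z : ι → R) {i j k l : ι} (hij : i ≠ j) (hkl : k ≠ l)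
    (hcompl : ({i, j} : Finset ι)ᶜ = {k, l}) {α β : R}
    (hsq : α * (Z i ^ 2 - Z j ^ 2) = β * (Z k ^ 2 - Z l ^ 2)) :
    α * (Z j * unsignedSigma Z i - Z i * unsignedSigma Z j) =
      β * (Z l * unsignedSigma Z k - Z k * unsignedSigma Z l) := by
  rw [mul_unsignedSigma_sub Z hij, mul_unsignedSigma_sub Z hkl, ← hcompl, compl_compl]
  linear_combination 2 * (∏ ν ∈ {i, j}, Z ν + ∏ ν ∈ {i, j}ᶜ, Z ν) * hsq

end UnsignedSigma

section SignedSigma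

variable {R : Type*} [CommRing R]

/-- The cubic map `σ` over an arbitrary commutative ring; over `ℂ` it unfolds to `sigma15`. -/
def signedSigma (Z : Fin 4 → R) (μ : Fin 4) : R :=
  (if μ = 0 then 1 else -1) * unsignedSigma Z μ

theorem signedSigma_zero (Z : Fin 4 → R) : signedSigma Z 0 = unsignedSigma Z 0 := by
  simp [signedSigma]

theorem signedSigma_of_ne_zero (Z : Fin 4 → R) {μ : Fin 4} (hμ : μ ≠ 0) :
    signedSigma Z μ = -unsignedSigma Z μ := by
  simp [signedSigma, hμ]

theorem stmt_15_general :
    (∀ Z : Fin 4 → R,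
      Z 1 * signedSigma Z 0 - Z 0 * signedSigma Z 1 + Z 3 * signedSigma Z 2
        + Z 2 * signedSigma Z 3 = 0 ∧
      Z 2 * signedSigma Z 0 + Z 3 * signedSigma Z 1 - Z 0 * signedSigma Z 2
        + Z 1 * signedSigma Z 3 = 0 ∧
      Z 3 * signedSigma Z 0 + Z 2 * signedSigma Z 1 + Z 1 * signedSigma Z 2
        - Z 0 * signedSigma Z 3 = 0) ∧
    (∀ (a b c : R) (Z : Fin 4 → R),
      b * ((Z 0) ^ 2 - (Z 1) ^ 2) = a * ((Z 0) ^ 2 - (Z 2) ^ 2) →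
      c * ((Z 0) ^ 2 - (Z 2) ^ 2) = b * ((Z 0) ^ 2 - (Z 3) ^ 2) →
      c * ((Z 0) ^ 2 - (Z 1) ^ 2) = a * ((Z 0) ^ 2 - (Z 3) ^ 2) →
      ((b - c) * Z 1 * signedSigma Z 0 + (b - c) * Z 0 * signedSigma Z 1
          - a * Z 3 * signedSigma Z 2 + a * Z 2 * signedSigma Z 3 = 0 ∧
       (c - a) * Z 2 * signedSigma Z 0 + b * Z 3 * signedSigma Z 1
          + (c - a) * Z 0 * signedSigma Z 2 - b * Z 1 * signedSigma Z 3 = 0 ∧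
       (a - b) * Z 3 * signedSigma Z 0 - c * Z 2 * signedSigma Z 1
          + c * Z 1 * signedSigma Z 2 + (a - b) * Z 0 * signedSigma Z 3 = 0)) := by
  have compl01 : ({0, 1} : Finset (Fin 4))ᶜ = {2, 3} := by decide
  have compl02 : ({0, 2} : Finset (Fin 4))ᶜ = {1, 3} := by decide
  have compl03 : ({0, 3} : Finset (Fin 4))ᶜ = {1, 2} := by decide
  refine ⟨fun Z => ?_, fun a b c Z h₁₂ h₂₃ h₁₃ => ?_⟩ <;>
    simp only [signedSigma_zero, signedSigma_of_ne_zero, ne_eq, one_ne_zero, Fin.reduceEq,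
      not_false_eq_true]
  · refine ⟨?_, ?_, ?_⟩
    · linear_combination mul_unsignedSigma_add_eq_of_compl Z (by decide) (by decide) compl01
    · linear_combination mul_unsignedSigma_add_eq_of_compl Z (by decide) (by decide) compl02
    · linear_combination mul_unsignedSigma_add_eq_of_compl Z (by decide) (by decide) compl03
  · have hsq01 : (b - c) * (Z 0 ^ 2 - Z 1 ^ 2) = -a * (Z 2 ^ 2 - Z 3 ^ 2) := by
      linear_combination h₁₂ - h₁₃
    have hsq02 : (c - a) * (Z 0 ^ 2 - Z 2 ^ 2) = b * (Z 1 ^ 2 - Z 3 ^ 2) := by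
      linear_combination h₁₂ + h₂₃
    have hsq03 : (a - b) * (Z 0 ^ 2 - Z 3 ^ 2) = -c * (Z 1 ^ 2 - Z 2 ^ 2) := by
      linear_combination h₂₃ - h₁₃
    refine ⟨?_, ?_, ?_⟩
    · linear_combination mul_unsignedSigma_sub_eq_of_compl Z (by decide) (by decide) compl01 hsq01
    · linear_combination mul_unsignedSigma_sub_eq_of_compl Z (by decide) (by decide) compl02 hsq02
    · linear_combination mul_unsignedSigma_sub_eq_of_compl Z (by decide) (by decide) compl03 hsq03

end SignedSigma

/-- `σ(Z)` satisfies the first three rows of the system `N(Z)·σ(Z) = 0` for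
every `Z`, and the last three rows whenever `Z` lies on the characteristic curve
`(Z₀² − Z₁²)/a = (Z₀² − Z₂²)/b = (Z₀² − Z₃²)/c`, whose equations are written as the
three pairwise cross-multiplied equalities so that zero parameters are allowed too. -/
theorem stmt_15 :
    (∀ Z : Fin 4 → ℂ,
      Z 1 * sigma15 Z 0 - Z 0 * sigma15 Z 1 + Z 3 * sigma15 Z 2 + Z 2 * sigma15 Z 3 = 0 ∧
      Z 2 * sigma15 Z 0 + Z 3 * sigma15 Z 1 - Z 0 * sigma15 Z 2 + Z 1 * sigma15 Z 3 = 0 ∧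
      Z 3 * sigma15 Z 0 + Z 2 * sigma15 Z 1 + Z 1 * sigma15 Z 2 - Z 0 * sigma15 Z 3 = 0) ∧
    (∀ (a b c : ℂ) (Z : Fin 4 → ℂ),
      b * ((Z 0) ^ 2 - (Z 1) ^ 2) = a * ((Z 0) ^ 2 - (Z 2) ^ 2) →
      c * ((Z 0) ^ 2 - (Z 2) ^ 2) = b * ((Z 0) ^ 2 - (Z 3) ^ 2) →
      c * ((Z 0) ^ 2 - (Z 1) ^ 2) = a * ((Z 0) ^ 2 - (Z 3) ^ 2) →
      ((b - c) * Z 1 * sigma15 Z 0 + (b - c) * Z 0 * sigma15 Z 1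
          - a * Z 3 * sigma15 Z 2 + a * Z 2 * sigma15 Z 3 = 0 ∧
       (c - a) * Z 2 * sigma15 Z 0 + b * Z 3 * sigma15 Z 1
          + (c - a) * Z 0 * sigma15 Z 2 - b * Z 1 * sigma15 Z 3 = 0 ∧
       (a - b) * Z 3 * sigma15 Z 0 - c * Z 2 * sigma15 Z 1
          + c * Z 1 * sigma15 Z 2 + (a - b) * Z 0 * sigma15 Z 3 = 0)) :=
  stmt_15_general
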